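/- There exists a limit computable function f : ℕ → ℕ such that for every uniformly c.e. sequence (U_n)_{n∈ℕ} of subsets of ℕ with each U_n cofinite, one has f(n) ∈ U_n for all but finitely many n. -/

import Mathlib

open Set Metric

section TopDefs

variable {α : Type*} [TopologicalSpace α]

/-- `A ⊆ α` is an arc with endpoints `x` and `y`:
a homeomorphic (continuous injective) image of `[0,1]` sending `0 ↦ x`, `1 ↦ y`. -/
def IsArc (A : Set α) (x y : α) : Prop :=
  ∃ f : Set.Icc (0:ℝ) 1 → α, Continuous f ∧ Function.Injective f ∧
    Set.range f = A ∧ f ⟨0, by norm_num⟩ = x ∧ f ⟨1, by norm_num⟩ = y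

/-- A continuum: a nonempty compact connected set. -/
def IsContinuum (X : Set α) : Prop := IsCompact X ∧ IsConnected X

/-- Any two distinct points of `X` are endpoints of an arc contained in `X`. -/
def ArcwiseConnectedSet (X : Set α) : Prop :=
  ∀ x ∈ X, ∀ y ∈ X, x ≠ y → ∃ A, A ⊆ X ∧ IsArc A x y

/-- `X` is unicoherent: for all closed connected `A, B ⊆ X` with `A ∪ B = X`,
the intersection `A ∩ B` is connected. -/
def UnicoherentSet (X : Set α) : Prop :=
  ∀ A B : Set α, A ⊆ X → B ⊆ X → IsClosed A → IsClosed B →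
    IsConnected A → IsConnected B → A ∪ B = X → IsConnected (A ∩ B)

/-- Every subcontinuum of `X` is unicoherent. -/
def HereditarilyUnicoherent (X : Set α) : Prop :=
  ∀ Y, Y ⊆ X → IsContinuum Y → UnicoherentSet Y

/-- A dendroid: an arcwise connected, hereditarily unicoherent continuum. -/
def IsDendroid (X : Set α) : Prop :=
  IsContinuum X ∧ ArcwiseConnectedSet X ∧ HereditarilyUnicoherent X

/-- The unit circle `S¹`. -/
def unitCircle : Set (EuclideanSpace ℝ (Fin 2)) := Metric.sphere 0 1

/-- A dendrite: a locally connected continuum containing no subset homeomorphic to `S¹`. -/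
def IsDendrite (X : Set α) : Prop :=
  IsContinuum X ∧ LocallyConnectedSpace ↥X ∧
    ∀ S : Set α, S ⊆ X → IsEmpty (↥S ≃ₜ ↥unitCircle)

/-- `x` and `y` lie in the same arc-component of `Y`. -/
def SameArcComponent (Y : Set α) (x y : α) : Prop :=
  x = y ∨ ∃ A, A ⊆ Y ∧ IsArc A x y

/-- `x` is a ramification point of `X`: `X \ {x}` has at least three arc-components. -/
def IsRamificationPoint (X : Set α) (x : α) : Prop :=
  x ∈ X ∧ ∃ u v w, u ∈ X \ {x} ∧ v ∈ X \ {x} ∧ w ∈ X \ {x} ∧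
    ¬ SameArcComponent (X \ {x}) u v ∧ ¬ SameArcComponent (X \ {x}) u w ∧
    ¬ SameArcComponent (X \ {x}) v w

/-- A tree (as a continuum): a dendrite with finitely many ramification points. -/
def IsTreeContinuum (X : Set α) : Prop :=
  IsDendrite X ∧ {x | IsRamificationPoint X x}.Finite

end TopDefs

section CompDefs

/-- The rational open ball in `ℝ²` coded by `((q₁, q₂), r)`. -/
def ballOfCode (c : (ℚ × ℚ) × ℚ) : Set (ℝ × ℝ) :=
  {x | dist x (((c.1.1 : ℝ), (c.1.2 : ℝ)) : ℝ × ℝ) < (c.2 : ℝ)}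

/-- A closed set `F ⊆ ℝ²` is `Π⁰₁` if it is the complement of the union of the rational
open balls coded by some c.e. set of codes. -/
def IsPi01Closed (F : Set (ℝ × ℝ)) : Prop :=
  ∃ W : (ℚ × ℚ) × ℚ → Prop, REPred W ∧ F = Set.univ \ ⋃ c ∈ {c | W c}, ballOfCode c

/-- `F ⊆ ℝ²` is c.e. closed if the set of codes of rational open balls meeting `F` is c.e. -/
def IsCEClosed (F : Set (ℝ × ℝ)) : Prop :=
  REPred (fun c : (ℚ × ℚ) × ℚ => (F ∩ ballOfCode c).Nonempty)

/-- A computable closed subset of `ℝ²`: both `Π⁰₁` and c.e. closed. -/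
def IsComputableClosed (F : Set (ℝ × ℝ)) : Prop :=
  IsPi01Closed F ∧ IsCEClosed F

/-- A point of `ℝ²` is computable if the set of codes of rational open balls
containing it is c.e. -/
def IsComputablePoint (x : ℝ × ℝ) : Prop :=
  REPred (fun c : (ℚ × ℚ) × ℚ => x ∈ ballOfCode c)

end CompDefs

section PsiDefs

/-- A tree of binary strings: a set of finite binary strings closed under prefixes. -/
def IsTreeOfStrings (T : Set (List Bool)) : Prop :=
  ∀ σ ∈ T, ∀ τ : List Bool, τ <+: σ → τ ∈ T

/-- The point `ψ(σ) ∈ ℝ²` associated with the binary string `σ`. -/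
noncomputable def psiPt (σ : List Bool) : ℝ × ℝ :=
  ((3:ℝ) ^ (-(σ.length : ℤ)) / 2 +
      2 * ∑ i ∈ Finset.range σ.length,
        (if σ.getD i false then (3:ℝ) ^ (-((i : ℤ) + 1)) else 0),
    (2:ℝ) ^ (-(σ.length : ℤ)))

/-- The planar embedding `Ψ(T)` of a tree `T` of binary strings: the closure of the union
of the segments from `ψ(σ⁻)` to `ψ(σ)` over nonempty `σ ∈ T` (together with the points
`ψ(σ)`, `σ ∈ T`, which makes no difference except for the degenerate trees `∅`, `{⟨⟩}`). -/
noncomputable def PsiSet (T : Set (List Bool)) : Set (ℝ × ℝ) :=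
  closure (psiPt '' T ∪ ⋃ σ ∈ T, ⋃ (_ : σ ≠ []), segment ℝ (psiPt σ.dropLast) (psiPt σ))

end PsiDefs

/-!
Fix an effective list `V 0, V 1, …` of all uniformly c.e. sequences, `V e m` being the `m`-th set
of the `e`-th one. A finite list `l` of indices is *good at `n`* if for every `m ≤ n` the sets
`V e m` with `e ∈ l` have a common point `x ≥ n`. Being good at `n` is c.e., and as `n` grows it
can only fail, so a list is good at almost all `n` iff it is good at all `n`, iff for every `m` the
sets `V e m` with `e ∈ l` have infinitely many common points. At stage `n` run through the indices
`e < n`, keeping each one that preserves goodness at `n`, and let `f n` be the least common point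
of the sets `V e n` for the kept `e`; this needs only c.e. questions, so `f` is limit computable.
The choices about any fixed `e` stabilise as `n` grows, and if all `V e m` are cofinite, then
adding `e` never destroys infinitely many common points: `e` is kept, and `f n ∈ V e n`, for almost
all `n`.
-/

open Filter

section RecursivelyEnumerable

open Nat.Partrec (Code)
open Encodable (encode decode)

variable {α β : Type*} [Primcodable α] [Primcodable β] {p : α → Prop}

theorem exists_code_forall_iff_dom (hp : REPred p) :
    ∃ c : Code, ∀ a, p a ↔ (c.eval (encode a)).Dom := by
  obtain ⟨c, hc⟩ := Code.exists_code.1 hp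
  exact ⟨c, fun a => by simp [hc, Part.assert]⟩

theorem exists_universal_rePred :
    ∃ V : ℕ → α → Prop, REPred (fun q : ℕ × α => V q.1 q.2) ∧
      ∀ p : α → Prop, REPred p → ∃ e, ∀ a, p a ↔ V e a := by
  refine ⟨fun e a => ((Denumerable.ofNat Code e).eval (encode a)).Dom, ?_, fun p hp => ?_⟩
  · exact (Code.eval_part.comp ((Computable.ofNat Code).comp Computable.fst)
      (Computable.encode.comp Computable.snd)).dom_re
  · obtain ⟨c, hc⟩ := exists_code_forall_iff_dom hp
    exact ⟨encode c, by simpa using hc⟩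

/-- `R a s` says that `a` has been enumerated into `p` by stage `s`, in a primitive recursive
enumeration of `p`. -/
structure IsStageEnumeration (R : α → ℕ → Prop) (p : α → Prop) : Prop where
  primrecRel : PrimrecRel R
  monotone : ∀ a, Monotone (R a)
  iff_exists_stage : ∀ a, p a ↔ ∃ s, R a s

theorem IsStageEnumeration.eventually_iff {R : α → ℕ → Prop} (hR : IsStageEnumeration R p) (a : α) :
    ∀ᶠ s in atTop, (R a s ↔ p a) := by
  rw [hR.iff_exists_stage]
  by_cases h : ∃ t, R a t
  · obtain ⟨t, ht⟩ := h
    filter_upwards [eventually_ge_atTop t] with s hs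
    exact ⟨fun hs => ⟨s, hs⟩, fun _ => hR.monotone a hs ht⟩
  · exact Eventually.of_forall fun s => ⟨fun hs => ⟨s, hs⟩, fun h' => absurd h' h⟩

theorem IsStageEnumeration.rePred {R : α → ℕ → Prop} (hR : IsStageEnumeration R p) :
    REPred p := by
  classical
  have hsearch : Partrec fun a => Nat.rfind fun s => Part.some (decide (R a s)) :=
    Partrec.rfind hR.primrecRel.decide.to_comp.partrec
  exact hsearch.dom_re.of_eq fun a => Nat.rfind_dom.trans (by simp [hR.iff_exists_stage])

theorem exists_isStageEnumeration (hp : REPred p) : ∃ R, IsStageEnumeration R p := by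
  obtain ⟨c, hc⟩ := exists_code_forall_iff_dom hp
  refine ⟨fun a s => ∃ y, y ∈ c.evaln s (encode a), ?_, ?_, fun a => ?_⟩
  · have heval : Primrec fun q : α × ℕ => c.evaln q.2 (encode q.1) :=
      Code.primrec_evaln.comp ((Primrec.snd.pair (Primrec.const c)).pair
        (Primrec.encode.comp Primrec.fst))
    exact (Primrec.eq.comp (Primrec.option_isSome.comp heval) (Primrec.const true)).of_eq
      fun q => Option.isSome_iff_exists
  · rintro a s t hst ⟨y, hy⟩
    exact ⟨y, Code.evaln_mono hst hy⟩
  · simp only [hc, Part.dom_iff_mem, Code.evaln_complete]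
    exact exists_comm

theorem rePred_comp (hp : REPred p) {f : β → α} (hf : Computable f) : REPred fun b => p (f b) :=
  Partrec.comp hp hf

theorem rePred_exists {p : α × β → Prop} (hp : REPred p) : REPred fun a => ∃ b, p (a, b) := by
  obtain ⟨R, hR⟩ := exists_isStageEnumeration hp
  let candidates (s : ℕ) : List β := (List.range s).filterMap decode
  have mem_candidates {b : β} {s : ℕ} : b ∈ candidates s ↔ ∃ i < s, decode i = some b := by
    simp [candidates]
  refine IsStageEnumeration.rePred
    (R := fun a s => ∃ b ∈ candidates s, R (a, b) s) ⟨?_, ?_, fun a => ?_⟩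
  · have hcandidates : Primrec candidates :=
      Primrec.listFilterMap Primrec.list_range (Primrec.decode.comp Primrec.snd)
    have hR' : PrimrecRel fun (b : β) (q : α × ℕ) => R (q.1, b) q.2 :=
      hR.primrecRel.comp ((Primrec.fst.comp Primrec.snd).pair Primrec.fst)
        (Primrec.snd.comp Primrec.snd)
    exact hR'.exists_mem_list.comp (hcandidates.comp Primrec.snd) Primrec.id
  · rintro a s t hst ⟨b, hb, hRb⟩
    obtain ⟨i, hi, hib⟩ := mem_candidates.1 hb
    exact ⟨b, mem_candidates.2 ⟨i, hi.trans_le hst, hib⟩, hR.monotone _ hst hRb⟩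
  · constructor
    · rintro ⟨b, hb⟩
      obtain ⟨s, hs⟩ := (hR.iff_exists_stage (a, b)).1 hb
      have hb' : b ∈ candidates (max s (encode b + 1)) :=
        mem_candidates.2 ⟨encode b, by omega, Encodable.encodek b⟩
      exact ⟨_, b, hb', hR.monotone _ (le_max_left _ _) hs⟩
    · rintro ⟨s, b, -, hs⟩
      exact ⟨b, (hR.iff_exists_stage (a, b)).2 ⟨s, hs⟩⟩

theorem rePred_forall_mem_list {p : α × β → Prop} (hp : REPred p) :
    REPred fun q : List α × β => ∀ a ∈ q.1, p (a, q.2) := by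
  obtain ⟨R, hR⟩ := exists_isStageEnumeration hp
  refine IsStageEnumeration.rePred
    (R := fun (q : List α × β) s => ∀ a ∈ q.1, R (a, q.2) s) ⟨?_, ?_, fun q => ⟨fun h => ?_, ?_⟩⟩
  · have hR' : PrimrecRel fun (a : α) (r : β × ℕ) => R (a, r.1) r.2 :=
      hR.primrecRel.comp (Primrec.fst.pair (Primrec.fst.comp Primrec.snd))
        (Primrec.snd.comp Primrec.snd)
    exact hR'.forall_mem_list.comp (Primrec.fst.comp Primrec.fst)
      ((Primrec.snd.comp Primrec.fst).pair Primrec.snd)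
  · exact fun q s t hst h a ha => hR.monotone _ hst (h a ha)
  · have hlate : ∀ᶠ s in atTop, ∀ a ∈ {a | a ∈ q.1}, R (a, q.2) s :=
      (eventually_all_finite q.1.finite_toSet).2 fun a ha =>
        (hR.eventually_iff (a, q.2)).mono fun s hs => hs.2 (h a ha)
    exact hlate.exists
  · rintro ⟨s, hs⟩ a ha
    exact (hR.iff_exists_stage (a, q.2)).2 ⟨s, hs a ha⟩

end RecursivelyEnumerable

/-- `f` is the pointwise limit of a computable function of an additional stage argument. -/
def LimitComputable {α σ : Type*} [Primcodable α] [Primcodable σ] (f : α → σ) : Prop :=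
  ∃ g : α × ℕ → σ, Computable g ∧ ∀ a, ∀ᶠ s in atTop, g (a, s) = f a

namespace LimitComputable

variable {α β σ : Type*} [Primcodable α] [Primcodable β] [Primcodable σ]

theorem of_computable {f : α → σ} (hf : Computable f) : LimitComputable f :=
  ⟨fun q => f q.1, hf.comp Computable.fst, fun _ => Eventually.of_forall fun _ => rfl⟩

theorem comp {f : β → σ} {g : α → β} (hf : LimitComputable f) (hg : LimitComputable g) :
    LimitComputable fun a => f (g a) := by
  obtain ⟨F, hF, hFf⟩ := hf
  obtain ⟨G, hG, hGg⟩ := hg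
  refine ⟨fun q => F (G q, q.2), hF.comp (hG.pair Computable.snd), fun a => ?_⟩
  filter_upwards [hGg a, hFf (g a)] with s hGs hFs
  rw [hGs, hFs]

theorem pair {f : α → β} {g : α → σ} (hf : LimitComputable f) (hg : LimitComputable g) :
    LimitComputable fun a => (f a, g a) := by
  obtain ⟨F, hF, hFf⟩ := hf
  obtain ⟨G, hG, hGg⟩ := hg
  refine ⟨fun q => (F q, G q), hF.pair hG, fun a => ?_⟩
  filter_upwards [hFf a, hGg a] with s hFs hGs
  rw [hFs, hGs]

theorem ite {p : α → Prop} [DecidablePred p] {f g : α → σ}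
    (hp : LimitComputable fun a => decide (p a)) (hf : LimitComputable f)
    (hg : LimitComputable g) : LimitComputable fun a => if p a then f a else g a := by
  have hcond : Computable fun r : Bool × σ × σ => cond r.1 r.2.1 r.2.2 :=
    Computable.fst.cond (Computable.fst.comp Computable.snd) (Computable.snd.comp Computable.snd)
  simpa only [Bool.cond_decide] using (of_computable hcond).comp (hp.pair (hf.pair hg))

theorem nat_rec {f : α → ℕ} {g : α → σ} {h : α × ℕ × σ → σ} (hf : LimitComputable f)
    (hg : LimitComputable g) (hh : LimitComputable h) :
    LimitComputable fun a =>
      Nat.rec (motive := fun _ => σ) (g a) (fun k r => h (a, k, r)) (f a) := by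
  obtain ⟨F, hF, hFf⟩ := hf
  obtain ⟨G, hG, hGg⟩ := hg
  obtain ⟨H, hH, hHh⟩ := hh
  have hstep : Computable₂ fun (q : α × ℕ) (r : ℕ × σ) => H ((q.1, r), q.2) :=
    hH.comp (((Computable.fst.comp Computable.fst).pair Computable.snd).pair
      (Computable.snd.comp Computable.fst))
  refine ⟨_, Computable.nat_rec hF hG hstep, fun a => ?_⟩
  have hrec (k : ℕ) : ∀ᶠ s in atTop,
      Nat.rec (motive := fun _ => σ) (G (a, s)) (fun k r => H ((a, k, r), s)) k =
        Nat.rec (motive := fun _ => σ) (g a) (fun k r => h (a, k, r)) k := by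
    induction k with
    | zero => exact hGg a
    | succ k ih =>
      filter_upwards [ih, hHh (a, k, _)] with s hs hHs
      rw [hs, hHs]
  filter_upwards [hFf a, hrec (f a)] with s hFs hs
  rw [hFs, hs]

theorem nat_find {p : α → ℕ → Prop} [∀ a, DecidablePred (p a)]
    (hp : LimitComputable fun q : α × ℕ => decide (p q.1 q.2)) (hex : ∀ a, ∃ x, p a x) :
    LimitComputable fun a => Nat.find (hex a) := by
  obtain ⟨P, hP, hPp⟩ := hp
  -- The approximation at stage `s` gives up its search at `s`, which makes it total.
  have hbounded (q : α × ℕ) : ∃ x, P ((q.1, x), q.2) = true ∨ q.2 ≤ x := ⟨q.2, .inr le_rfl⟩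
  have hcomputable : Computable fun q => Nat.find (hbounded q) := by
    refine Computable.find (Computable.computablePred ?_) hbounded
    simp only [Bool.decide_or, Bool.decide_eq_true]
    exact Primrec.or.to_comp.comp
      (hP.comp (((Computable.fst.comp Computable.fst).pair Computable.snd).pair
        (Computable.snd.comp Computable.fst)))
      (Primrec.nat_le.decide.to_comp.comp (Computable.snd.comp Computable.fst) Computable.snd)
  refine ⟨fun q => Nat.find (hbounded q), hcomputable, fun a => ?_⟩
  have hcorrect : ∀ᶠ s in atTop, ∀ x ∈ Set.Iic (Nat.find (hex a)),
      P ((a, x), s) = decide (p a x) :=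
    (eventually_all_finite (Set.finite_Iic _)).2 fun x _ => hPp (a, x)
  filter_upwards [hcorrect, eventually_gt_atTop (Nat.find (hex a))] with s hs hlt
  refine (Nat.find_eq_iff _).2 ⟨.inl ?_, fun x hx => ?_⟩
  · simpa [hs _ Set.self_mem_Iic] using Nat.find_spec (hex a)
  · simpa [hs x hx.le, hx.trans hlt] using Nat.find_min (hex a) hx

theorem decide_of_rePred {p : α → Prop} [DecidablePred p] (hp : REPred p) :
    LimitComputable fun a => decide (p a) := by
  classical
  obtain ⟨R, hR⟩ := exists_isStageEnumeration hp
  refine ⟨fun q => decide (R q.1 q.2), hR.primrecRel.decide.to_comp, fun a => ?_⟩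
  filter_upwards [hR.eventually_iff a] with s hs
  exact decide_eq_decide.2 hs

end LimitComputable

section Greedy

open Classical in
/-- The indices below `k`, in decreasing order, that are kept when each index in turn is kept
exactly if the list of kept indices continues to satisfy `P`. -/
noncomputable def greedyList (P : List ℕ → Prop) : ℕ → List ℕ
  | 0 => []
  | e + 1 => if P (e :: greedyList P e) then e :: greedyList P e else greedyList P e

open Classical in
theorem greedyList_succ (P : List ℕ → Prop) (e : ℕ) : greedyList P (e + 1) =
    if P (e :: greedyList P e) then e :: greedyList P e else greedyList P e := rfl

theorem greedyList_spec {P : List ℕ → Prop} (hnil : P []) (k : ℕ) : P (greedyList P k) := by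
  induction k with
  | zero => exact hnil
  | succ k ih =>
    rw [greedyList_succ]
    split_ifs with h
    exacts [h, ih]

theorem greedyList_subset (P : List ℕ → Prop) {j k : ℕ} (hjk : j ≤ k) :
    greedyList P j ⊆ greedyList P k := by
  induction k, hjk using Nat.le_induction with
  | base => exact List.Subset.refl _
  | succ k _ ih =>
    rw [greedyList_succ]
    split_ifs
    exacts [List.subset_cons_of_subset k ih, ih]

theorem mem_greedyList_succ {P : List ℕ → Prop} {e : ℕ} (h : P (e :: greedyList P e)) :
    e ∈ greedyList P (e + 1) := by
  simp [greedyList_succ, h]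

theorem eventually_greedyList_eq {ι : Type*} {F : Filter ι} {P : ι → List ℕ → Prop}
    {Q : List ℕ → Prop} (h : ∀ l, ∀ᶠ i in F, (P i l ↔ Q l)) (k : ℕ) :
    ∀ᶠ i in F, greedyList (P i) k = greedyList Q k := by
  induction k with
  | zero => exact Eventually.of_forall fun _ => rfl
  | succ k ih =>
    filter_upwards [ih, h (k :: greedyList Q k)] with i hi hiff
    classical
    rw [greedyList_succ, greedyList_succ, hi]
    exact if_congr hiff rfl rfl

open Classical in
theorem limitComputable_greedyList {α : Type*} [Primcodable α] {P : α → List ℕ → Prop}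
    (hP : LimitComputable fun q : α × List ℕ => decide (P q.1 q.2)) :
    LimitComputable fun q : α × ℕ => greedyList (P q.1) q.2 := by
  have hcons : Computable fun q : (α × ℕ) × ℕ × List ℕ => q.2.1 :: q.2.2 :=
    Computable.list_cons.comp (Computable.fst.comp Computable.snd)
      (Computable.snd.comp Computable.snd)
  have hstep : LimitComputable fun q : (α × ℕ) × ℕ × List ℕ =>
      if P q.1.1 (q.2.1 :: q.2.2) then q.2.1 :: q.2.2 else q.2.2 :=
    (hP.comp (.of_computable ((Computable.fst.comp Computable.fst).pair hcons))).ite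
      (.of_computable hcons) (.of_computable (Computable.snd.comp Computable.snd))
  have hrec := LimitComputable.nat_rec (.of_computable (Computable.snd (α := α)))
    (.of_computable (Computable.const [])) hstep
  convert hrec using 2 with q
  induction q.2 with
  | zero => rfl
  | succ k ih => simp only [greedyList_succ, ih]

end Greedy

section CommonPoints

variable {V : ℕ → ℕ → ℕ → Prop} {l : List ℕ}

/-- For each `m ≤ n`, the `m`-th sets of the sequences with index in `l` have a common point
`x ≥ n`. Here `V e m x` says that `x` lies in the `m`-th set of the `e`-th sequence. -/
def HasCommonPoints (V : ℕ → ℕ → ℕ → Prop) (n : ℕ) (l : List ℕ) : Prop :=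
  ∀ m ≤ n, ∃ x ≥ n, ∀ e ∈ l, V e m x

theorem hasCommonPoints_nil (V : ℕ → ℕ → ℕ → Prop) (n : ℕ) : HasCommonPoints V n [] :=
  fun _ _ => ⟨n, le_rfl, by simp⟩

theorem HasCommonPoints.anti {n k : ℕ} (hnk : n ≤ k) (h : HasCommonPoints V k l) :
    HasCommonPoints V n l := fun m hm =>
  let ⟨x, hx, hl⟩ := h m (hm.trans hnk)
  ⟨x, hnk.trans hx, hl⟩

theorem forall_hasCommonPoints_iff_frequently :
    (∀ n, HasCommonPoints V n l) ↔ ∀ m, ∃ᶠ x in atTop, ∀ e ∈ l, V e m x := by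
  simp only [frequently_atTop]
  refine ⟨fun h m n => ?_, fun h n m _ => h m n⟩
  obtain ⟨x, hx, hl⟩ := h (max m n) m (le_max_left m n)
  exact ⟨x, (le_max_right m n).trans hx, hl⟩

theorem forall_hasCommonPoints_cons {e : ℕ} (hl : ∀ n, HasCommonPoints V n l)
    (he : ∀ m, ∀ᶠ x in atTop, V e m x) (n : ℕ) : HasCommonPoints V n (e :: l) := by
  revert n
  rw [forall_hasCommonPoints_iff_frequently] at hl ⊢
  intro m
  simpa only [List.forall_mem_cons] using (he m).and_frequently (hl m)

theorem eventually_hasCommonPoints_iff_forall (V : ℕ → ℕ → ℕ → Prop) (l : List ℕ) :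
    ∀ᶠ n in atTop, (HasCommonPoints V n l ↔ ∀ k, HasCommonPoints V k l) := by
  by_cases h : ∀ k, HasCommonPoints V k l
  · exact Eventually.of_forall fun n => iff_of_true (h n) h
  · obtain ⟨k, hk⟩ := not_forall.1 h
    filter_upwards [eventually_ge_atTop k] with n hn
    exact iff_of_false (fun hn' => hk (hn'.anti hn)) h

theorem eventually_mem_greedyList_hasCommonPoints {e : ℕ} (he : ∀ m, ∀ᶠ x in atTop, V e m x) :
    ∀ᶠ n in atTop, e ∈ greedyList (HasCommonPoints V n) n := by
  have hkept : e ∈ greedyList (fun l => ∀ n, HasCommonPoints V n l) (e + 1) :=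
    mem_greedyList_succ <|
      forall_hasCommonPoints_cons
        (greedyList_spec (P := fun l => ∀ n, HasCommonPoints V n l) (hasCommonPoints_nil V) e) he
  filter_upwards [eventually_ge_atTop (e + 1),
    eventually_greedyList_eq (eventually_hasCommonPoints_iff_forall V) (e + 1)] with n hn hstable
  exact greedyList_subset _ hn (hstable ▸ hkept)

theorem rePred_exists_ge_forall_mem_list
    (hV : REPred fun q : ℕ × ℕ × ℕ => V q.1 q.2.1 q.2.2) :
    REPred fun q : ℕ × ℕ × List ℕ => ∃ x ≥ q.2.1, ∀ e ∈ q.2.2, V e q.1 x := by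
  have hshift : Computable fun q : (ℕ × ℕ × List ℕ) × ℕ => (q.1.2.2, q.1.1, q.1.2.1 + q.2) :=
    have hnl := Computable.snd.comp Computable.fst
    (Computable.snd.comp hnl).pair <| (Computable.fst.comp Computable.fst).pair <|
      Primrec.nat_add.to_comp.comp (Computable.fst.comp hnl) Computable.snd
  have hshifted := rePred_comp (rePred_forall_mem_list hV) hshift
  exact (rePred_exists hshifted).of_eq fun q => by simp [le_iff_exists_add]

theorem rePred_hasCommonPoints (hV : REPred fun q : ℕ × ℕ × ℕ => V q.1 q.2.1 q.2.2) :
    REPred fun q : ℕ × List ℕ => HasCommonPoints V q.1 q.2 := by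
  have hrange : Computable fun q : ℕ × List ℕ => (List.range (q.1 + 1), q) :=
    (Primrec.list_range.to_comp.comp (Computable.succ.comp Computable.fst)).pair Computable.id
  have hcolumns := rePred_comp (rePred_forall_mem_list (rePred_exists_ge_forall_mem_list hV)) hrange
  exact hcolumns.of_eq fun q => by
    simp only [HasCommonPoints, List.mem_range, Nat.lt_succ_iff]

theorem exists_limitComputable_eventually_mem
    (hV : REPred fun q : ℕ × ℕ × ℕ => V q.1 q.2.1 q.2.2) :
    ∃ f : ℕ → ℕ, LimitComputable f ∧
      ∀ e, (∀ m, ∀ᶠ x in atTop, V e m x) → ∀ᶠ n in atTop, V e n (f n) := by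
  classical
  let kept (n : ℕ) : List ℕ := greedyList (HasCommonPoints V n) n
  have hkept : LimitComputable kept :=
    (limitComputable_greedyList (.decide_of_rePred (rePred_hasCommonPoints hV))).comp
      (.of_computable (Computable.id.pair Computable.id))
  have hex (n : ℕ) : ∃ x, ∀ e ∈ kept n, V e n x :=
    let ⟨x, _, hx⟩ := greedyList_spec (hasCommonPoints_nil V n) n n le_rfl
    ⟨x, hx⟩
  have hcommon : LimitComputable fun q : ℕ × ℕ => decide (∀ e ∈ kept q.1, V e q.1 q.2) :=
    (LimitComputable.decide_of_rePred (rePred_forall_mem_list hV)).comp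
      ((hkept.comp (.of_computable Computable.fst)).pair (.of_computable Computable.id))
  refine ⟨fun n => Nat.find (hex n), .nat_find hcommon hex, fun e he => ?_⟩
  filter_upwards [eventually_mem_greedyList_hasCommonPoints he] with n hn
  exact Nat.find_spec (hex n) e hn

end CommonPoints

theorem exists_limit_computable_function_meeting_uniformly_ce_cofinite_sequences :
    ∃ f : ℕ → ℕ,
      (∃ g : ℕ × ℕ → ℕ, Computable g ∧ ∀ n : ℕ, ∃ s₀ : ℕ, ∀ s : ℕ, s₀ ≤ s → g (n, s) = f n) ∧
      ∀ U : ℕ → ℕ → Prop, REPred (fun p : ℕ × ℕ => U p.1 p.2) →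
        (∀ n : ℕ, {x : ℕ | ¬ U n x}.Finite) →
        {n : ℕ | ¬ U n (f n)}.Finite := by
  obtain ⟨V, hV, huniversal⟩ := exists_universal_rePred (α := ℕ × ℕ)
  obtain ⟨f, ⟨g, hg, hgf⟩, hf⟩ :=
    exists_limitComputable_eventually_mem (V := fun e m x => V e (m, x)) hV
  refine ⟨f, ⟨g, hg, fun n => eventually_atTop.1 (hgf n)⟩, fun U hU hfin => ?_⟩
  obtain ⟨e, he⟩ := huniversal _ hU
  simp only [← eventually_cofinite, Nat.cofinite_eq_atTop] at hfin ⊢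
  simpa only [← he] using hf e (by simpa only [← he] using hfin)
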